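/- arXiv:2311.07951 — 2 statements merged into one kernel-verified Lean document; each statement's English description precedes it below -/
import Mathlib

section
/- Let σ > 0, let Z₁, Z₂ be independent standard normal random variables, let U be a positive random variable independent of (Z₁, Z₂), and set X = σ·√(2U)·(Z₁, Z₂). Let R = ‖X‖ and let θ be uniformly distributed on (0, 2π) and independent of (U, Z₁, Z₂, θ being independent of X). Then R·cos θ has the same distribution as σ·√(2U)·Z₁. -/
/-!
The law of `X` is invariant under rotations, because `cos φ * Z₁ + sin φ * Z₂` is again standard
normal and independent of `U`. Hence `X₁ cos φ + X₂ sin φ` has the law of `X₁ = σ√(2U)·Z₁` for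
every fixed `φ` (`map_scale_mul_rotate`). On the other hand, for a fixed vector `x` with polar angle
`α` one has `x₁ cos t + x₂ sin t = ‖x‖ cos (t - α)`, and shifting a uniform angle by `α` does not
change integrals over a full period (`setLIntegral_norm_mul_cos`). So the law of `‖X‖ cos θ` equals
the law of `X₁ cos θ + X₂ sin θ`, and Tonelli's theorem, integrating over `X` first, identifies
the latter with the law of `X₁`.
-/

open MeasureTheory ProbabilityTheory Real

/-- The point `(a, b)` of the Euclidean plane `ℝ²`. -/
noncomputable def toE2 (a b : ℝ) : EuclideanSpace ℝ (Fin 2) :=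
  (WithLp.equiv 2 (Fin 2 → ℝ)).symm ![a, b]

lemma setLIntegral_comp_sub_of_periodic {g : ℝ → ENNReal}
    (hg : Function.Periodic g (2 * π)) (a : ℝ) :
    ∫⁻ t in Set.Ioo 0 (2 * π), g (t - a) = ∫⁻ t in Set.Ioo 0 (2 * π), g t := by
  rw [setLIntegral_congr Ioo_ae_eq_Ioc, setLIntegral_congr Ioo_ae_eq_Ioc]
  have h1 := (measurePreserving_sub_right (volume : Measure ℝ) a).setLIntegral_comp_preimage_emb
    (measurableEmbedding_subRight a) g (Set.Ioc (-a) (-a + 2 * π))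
  have h2 : (fun x : ℝ => x - a) ⁻¹' Set.Ioc (-a) (-a + 2 * π) = Set.Ioc 0 (2 * π) := by
    ext x
    simp only [Set.mem_preimage, Set.mem_Ioc]
    constructor <;> rintro ⟨h, h'⟩ <;> constructor <;> linarith
  rw [h2] at h1
  rw [h1]
  have h3 := (isAddFundamentalDomain_Ioc two_pi_pos (-a) volume).setLIntegral_eq
    (isAddFundamentalDomain_Ioc two_pi_pos 0 volume) g hg.map_vadd_zmultiples
  rw [h3, zero_add]

/-- Over a uniform angle, `‖x‖ cos t` and the rotated coordinate `x₁ cos t + x₂ sin t` have the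
same distribution: they differ by a shift of `t` by the polar angle of `x`. -/
lemma setLIntegral_norm_mul_cos (f : ℝ → ENNReal) (x : EuclideanSpace ℝ (Fin 2)) :
    ∫⁻ t in Set.Ioo 0 (2 * π), f (‖x‖ * cos t)
      = ∫⁻ t in Set.Ioo 0 (2 * π), f (cos t * x 0 + sin t * x 1) := by
  set z : ℂ := ⟨x 0, x 1⟩ with hz
  have hn : ‖x‖ = ‖z‖ := by
    rw [EuclideanSpace.norm_eq, Complex.norm_eq_sqrt_sq_add_sq, Fin.sum_univ_two]
    simp [hz]
  have h0 : ‖z‖ * cos z.arg = x 0 := Complex.norm_mul_cos_arg z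
  have h1 : ‖z‖ * sin z.arg = x 1 := Complex.norm_mul_sin_arg z
  rw [← setLIntegral_comp_sub_of_periodic (g := fun t => f (‖x‖ * cos t)) _ z.arg]
  · refine lintegral_congr fun t => ?_
    simp only
    rw [cos_sub, hn, ← h0, ← h1]
    ring_nf
  · intro t
    simp only [cos_add_two_pi]

lemma map_rotate_eq_gaussianReal {Ω : Type*} [MeasurableSpace Ω] {P : Measure Ω}
    {Z₁ Z₂ : Ω → ℝ} (hZ₁ : Measurable Z₁) (hZ₂ : Measurable Z₂)
    (hZ₁law : P.map Z₁ = gaussianReal 0 1) (hZ₂law : P.map Z₂ = gaussianReal 0 1)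
    (hZindep : IndepFun Z₁ Z₂ P) (φ : ℝ) :
    P.map (fun ω => cos φ * Z₁ ω + sin φ * Z₂ ω) = gaussianReal 0 1 := by
  have h := gaussianReal_add_gaussianReal_of_indepFun
    (hZindep.comp (measurable_const_mul (cos φ)) (measurable_const_mul (sin φ)))
    (gaussianReal_const_mul ⟨hZ₁.aemeasurable, hZ₁law⟩ (cos φ)).map_eq
    (gaussianReal_const_mul ⟨hZ₂.aemeasurable, hZ₂law⟩ (sin φ)).map_eq
  refine h.trans ?_
  congr 1
  · simp
  · ext
    simp

/-- Rotation invariance of the scale mixture: since `U` is independent of the pair `(Z₁, Z₂)`,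
the pairs `(U, cos φ * Z₁ + sin φ * Z₂)` and `(U, Z₁)` have the same joint law. -/
lemma map_scale_mul_rotate {Ω : Type*} [MeasurableSpace Ω] {P : Measure Ω} [IsProbabilityMeasure P]
    {Z₁ Z₂ U : Ω → ℝ} (hZ₁ : Measurable Z₁) (hZ₂ : Measurable Z₂) (hU : Measurable U)
    (hZ₁law : P.map Z₁ = gaussianReal 0 1) (hZ₂law : P.map Z₂ = gaussianReal 0 1)
    (hZindep : IndepFun Z₁ Z₂ P) (hUindep : IndepFun U (fun ω => (Z₁ ω, Z₂ ω)) P)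
    {s : ℝ → ℝ} (hs : Measurable s) (φ : ℝ) :
    P.map (fun ω => s (U ω) * (cos φ * Z₁ ω + sin φ * Z₂ ω)) = P.map (fun ω => s (U ω) * Z₁ ω) := by
  have hW : Measurable fun ω => cos φ * Z₁ ω + sin φ * Z₂ ω := by fun_prop
  have i1 : IndepFun U (fun ω => cos φ * Z₁ ω + sin φ * Z₂ ω) P :=
    hUindep.comp measurable_id
      (by fun_prop : Measurable fun p : ℝ × ℝ => cos φ * p.1 + sin φ * p.2)
  have i2 : IndepFun U Z₁ P := hUindep.comp measurable_id measurable_fst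
  have joint : P.map (fun ω => (U ω, cos φ * Z₁ ω + sin φ * Z₂ ω)) = P.map (fun ω => (U ω, Z₁ ω)) := by
    rw [i1.map_prod_eq_prod_map_map hU.aemeasurable hW.aemeasurable,
      i2.map_prod_eq_prod_map_map hU.aemeasurable hZ₁.aemeasurable,
      map_rotate_eq_gaussianReal hZ₁ hZ₂ hZ₁law hZ₂law hZindep, hZ₁law]
  have hm : Measurable fun p : ℝ × ℝ => s p.1 * p.2 := by fun_prop
  have := congrArg (Measure.map fun p : ℝ × ℝ => s p.1 * p.2) joint
  rwa [Measure.map_map hm (hU.prodMk hW), Measure.map_map hm (hU.prodMk hZ₁)] at this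

/-- Let `σ > 0`, let `Z₁, Z₂` be independent standard normal random variables,
`U` a positive random variable independent of `(Z₁, Z₂)`, and `X = σ√(2U)·(Z₁, Z₂)`.
Let `R = ‖X‖` and `θ` be uniform on `(0, 2π)` and independent of `X`.
Then `R cos θ` has the same distribution as `σ√(2U)·Z₁`. -/
theorem projection_eq_dist_gaussian_scale_mixture
    {Ω : Type*} [MeasureSpace Ω] [IsProbabilityMeasure (ℙ : Measure Ω)]
    (σ : ℝ) (hσ : 0 < σ)
    (Z₁ Z₂ U θ : Ω → ℝ)
    (hZ₁ : Measurable Z₁) (hZ₂ : Measurable Z₂) (hU : Measurable U) (hθ : Measurable θ)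
    (hZ₁law : Measure.map Z₁ ℙ = gaussianReal 0 1)
    (hZ₂law : Measure.map Z₂ ℙ = gaussianReal 0 1)
    (hZindep : IndepFun Z₁ Z₂ ℙ)
    (hUpos : ∀ ω, 0 < U ω)
    (hUindep : IndepFun U (fun ω => (Z₁ ω, Z₂ ω)) ℙ)
    (X : Ω → EuclideanSpace ℝ (Fin 2))
    (hXdef : X = fun ω =>
      toE2 (σ * Real.sqrt (2 * U ω) * Z₁ ω) (σ * Real.sqrt (2 * U ω) * Z₂ ω))
    (hθlaw : Measure.map θ ℙ
      = (ENNReal.ofReal (2 * π))⁻¹ • volume.restrict (Set.Ioo 0 (2 * π)))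
    (hθindep : IndepFun X θ ℙ) :
    Measure.map (fun ω => ‖X ω‖ * Real.cos (θ ω)) ℙ
      = Measure.map (fun ω => σ * Real.sqrt (2 * U ω) * Z₁ ω) ℙ := by
  set S : Ω → ℝ := fun ω => σ * Real.sqrt (2 * U ω) with hS
  have hX0 : ∀ ω, X ω 0 = S ω * Z₁ ω := fun ω => by simp [hXdef, toE2, hS]
  have hX1 : ∀ ω, X ω 1 = S ω * Z₂ ω := fun ω => by simp [hXdef, toE2, hS]
  have hX : Measurable X := by
    rw [hXdef]
    refine (WithLp.measurable_toLp 2 (Fin 2 → ℝ)).comp (measurable_pi_lambda _ fun i => ?_)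
    fin_cases i
    · simp only [Fin.zero_eta, Matrix.cons_val_zero]
      fun_prop
    · simp only [Fin.mk_one, Matrix.cons_val_one, Matrix.cons_val_zero]
      fun_prop
  have hrot : ∀ φ, Measure.map (fun ω => cos φ * X ω 0 + sin φ * X ω 1) ℙ
      = Measure.map (fun ω => S ω * Z₁ ω) ℙ := fun φ => by
    rw [← map_scale_mul_rotate hZ₁ hZ₂ hU hZ₁law hZ₂law hZindep hUindep
      (s := fun u => σ * Real.sqrt (2 * u)) (by fun_prop) φ]
    congr 1
    funext ω
    rw [hX0, hX1]
    ring
  have hjoint := hθindep.map_prod_eq_prod_map_map hX.aemeasurable hθ.aemeasurable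
  have hprob : IsProbabilityMeasure (Measure.map θ ℙ) := Measure.isProbabilityMeasure_map hθ.aemeasurable
  have hprobX : IsProbabilityMeasure (Measure.map X ℙ) := Measure.isProbabilityMeasure_map hX.aemeasurable
  refine Measure.ext_of_lintegral _ fun f hf => ?_
  have hF : Measurable fun p : EuclideanSpace ℝ (Fin 2) × ℝ => f (‖p.1‖ * cos p.2) := by fun_prop
  have hG : Measurable fun p : EuclideanSpace ℝ (Fin 2) × ℝ =>
      f (cos p.2 * p.1 0 + sin p.2 * p.1 1) := by fun_prop
  calc ∫⁻ y, f y ∂(Measure.map (fun ω => ‖X ω‖ * cos (θ ω)) ℙ)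
      = ∫⁻ p, f (‖p.1‖ * cos p.2) ∂((Measure.map X ℙ).prod (Measure.map θ ℙ)) := by
        rw [← hjoint, lintegral_map hF (hX.prodMk hθ), lintegral_map hf (by fun_prop)]
    _ = ∫⁻ x, ∫⁻ t, f (‖x‖ * cos t) ∂(Measure.map θ ℙ) ∂(Measure.map X ℙ) :=
        lintegral_prod _ hF.aemeasurable
    _ = ∫⁻ x, ∫⁻ t, f (cos t * x 0 + sin t * x 1) ∂(Measure.map θ ℙ) ∂(Measure.map X ℙ) := by
        refine lintegral_congr fun x => ?_
        rw [hθlaw, lintegral_smul_measure, lintegral_smul_measure, setLIntegral_norm_mul_cos]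
    _ = ∫⁻ t, ∫⁻ x, f (cos t * x 0 + sin t * x 1) ∂(Measure.map X ℙ) ∂(Measure.map θ ℙ) :=
        lintegral_lintegral_swap hG.aemeasurable
    _ = ∫⁻ _, ∫⁻ y, f y ∂(Measure.map (fun ω => S ω * Z₁ ω) ℙ) ∂(Measure.map θ ℙ) := by
        refine lintegral_congr fun t => ?_
        rw [← hrot t, lintegral_map hf (by fun_prop), lintegral_map (by fun_prop) hX]
    _ = ∫⁻ y, f y ∂(Measure.map (fun ω => S ω * Z₁ ω) ℙ) := by simp
end

section
/- Let 0 < α ≤ 2 and σ > 0. Let Z₁, Z₂ be independent standard normal random variables and let U be a positive random variable independent of (Z₁, Z₂) whose Laplace transform satisfies E[exp(−s·U)] = exp(−s^(α/2)) for all s ≥ 0. Set X = σ·√(2U)·(Z₁, Z₂), R = ‖X‖, and let θ be uniformly distributed on (0, 2π) and independent of X. Then the characteristic function of T₁ = R·cos θ is φ_{T₁}(t) = exp(−σ^α·|t|^α) for all real t; that is, T₁ follows a zero-location symmetric α-stable distribution with index α and scale σ. -/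
/-!
For a fixed vector `(a, b)` of norm `r`, one has `a cos θ + b sin θ = r cos (θ - φ)` with `φ` the
argument of `a + b i`. Averaging over a full period, `exp (i t r cos θ)` may therefore be replaced by
`exp (i t (a cos θ + b sin θ))` (`integral_norm_cos_eq`). Since `θ` is independent of `X`, Fubini
turns the characteristic function of `‖X‖ cos θ` into the average over `θ` of the characteristic
functions of the linear projections `X₀ cos θ + X₁ sin θ`. Conditionally on `U` such a projection is
a centred Gaussian of variance `2σ²U`, because `cos² θ + sin² θ = 1`; its characteristic function is
thus the Laplace transform of `U` at `σ²t²`, for every `θ` (`integral_exp_projection`). No Bessel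
functions are needed.
-/

open MeasureTheory ProbabilityTheory Real

/-- Rotation invariance of the angular average: over a full period, the polar projection
`r cos θ` of a vector may be replaced by its linear projection on the direction `θ`. -/
lemma integral_norm_cos_eq (t : ℝ) (x : EuclideanSpace ℝ (Fin 2)) :
    ∫ θ in Set.Ioo 0 (2 * π), Complex.exp (Complex.I * t * (‖x‖ * Real.cos θ))
      = ∫ θ in Set.Ioo 0 (2 * π),
          Complex.exp (Complex.I * t * (x 0 * Real.cos θ + x 1 * Real.sin θ)) := by
  have h2 : (0 : ℝ) ≤ 2 * π := by positivity
  set z : ℂ := ⟨x 0, x 1⟩ with hz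
  have hn : ‖x‖ = ‖z‖ := by
    rw [EuclideanSpace.norm_eq, Complex.norm_def, Complex.normSq_apply]
    simp [Fin.sum_univ_two, hz, pow_two]
  have h0 : x 0 = ‖z‖ * Real.cos z.arg := by rw [Complex.norm_mul_cos_arg]
  have h1 : x 1 = ‖z‖ * Real.sin z.arg := by rw [Complex.norm_mul_sin_arg]
  set f : ℝ → ℂ := fun θ => Complex.exp (Complex.I * t * (‖x‖ * Real.cos θ)) with hf
  have hper : Function.Periodic f (2 * π) := fun θ => by
    simp only [hf, Real.cos_add_two_pi]
  have hg : ∀ θ : ℝ, Complex.exp (Complex.I * t * (x 0 * Real.cos θ + x 1 * Real.sin θ))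
      = f (θ - z.arg) := fun θ => by
    simp only [hf]
    rw [h0, h1, hn, Real.cos_sub]
    push_cast
    ring_nf
  simp_rw [hg]
  rw [← integral_Ioc_eq_integral_Ioo, ← integral_Ioc_eq_integral_Ioo,
    ← intervalIntegral.integral_of_le h2, ← intervalIntegral.integral_of_le h2,
    intervalIntegral.integral_comp_sub_right]
  have := hper.intervalIntegral_add_eq 0 (0 - z.arg)
  rw [zero_add, show 0 - z.arg + 2 * π = 2 * π - z.arg by ring] at this
  exact this

/-- The standard Gaussian law on the plane is isotropic: its characteristic function only depends
on the norm of the frequency `k • (c, s)`. -/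
lemma integral_exp_gaussian_prod (k c s : ℝ) (hcs : c ^ 2 + s ^ 2 = 1) :
    ∫ z : ℝ × ℝ, Complex.exp (Complex.I * (k * (c * z.1 + s * z.2)))
        ∂((gaussianReal 0 1).prod (gaussianReal 0 1))
      = ((Real.exp (-(k ^ 2 / 2)) : ℝ) : ℂ) := by
  have h : ∀ z : ℝ × ℝ, Complex.exp (Complex.I * (k * (c * z.1 + s * z.2)))
      = Complex.exp ((k * c : ℝ) * z.1 * Complex.I)
        * Complex.exp ((k * s : ℝ) * z.2 * Complex.I) := fun z => by
    rw [← Complex.exp_add]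
    push_cast
    ring_nf
  simp_rw [h]
  rw [integral_prod_mul (fun x : ℝ => Complex.exp ((k * c : ℝ) * x * Complex.I))
    (fun x : ℝ => Complex.exp ((k * s : ℝ) * x * Complex.I)),
    ← charFun_apply_real, ← charFun_apply_real, charFun_gaussianReal, charFun_gaussianReal,
    ← Complex.exp_add, Complex.ofReal_exp]
  congr 1
  have hcs' : (c : ℂ) ^ 2 + (s : ℂ) ^ 2 = 1 := by exact_mod_cast hcs
  push_cast
  linear_combination (-(k : ℂ) ^ 2 / 2) * hcs'

/-- Characteristic function of the projection of the Gaussian scale mixture on a unit direction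
`(c, s)`: conditioning on `U` expresses it through the Laplace transform of `U`. -/
lemma integral_exp_projection
    {Ω : Type*} [MeasureSpace Ω] [IsProbabilityMeasure (ℙ : Measure Ω)]
    (σ : ℝ) (Z₁ Z₂ U : Ω → ℝ)
    (hZ₁ : Measurable Z₁) (hZ₂ : Measurable Z₂) (hU : Measurable U)
    (hZ₁law : Measure.map Z₁ ℙ = gaussianReal 0 1)
    (hZ₂law : Measure.map Z₂ ℙ = gaussianReal 0 1)
    (hZindep : IndepFun Z₁ Z₂ ℙ)
    (hUpos : ∀ ω, 0 < U ω)
    (hUindep : IndepFun U (fun ω => (Z₁ ω, Z₂ ω)) ℙ)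
    (t c s : ℝ) (hcs : c ^ 2 + s ^ 2 = 1) :
    ∫ ω, Complex.exp (Complex.I * t * ((σ * Real.sqrt (2 * U ω) * Z₁ ω : ℝ) * c
        + (σ * Real.sqrt (2 * U ω) * Z₂ ω : ℝ) * s)) ∂ℙ
      = ((∫ ω, Real.exp (-((σ ^ 2 * t ^ 2) * U ω)) ∂ℙ : ℝ) : ℂ) := by
  have hZ : Measurable (fun ω => (Z₁ ω, Z₂ ω)) := hZ₁.prodMk hZ₂
  have hlaw : Measure.map (fun ω => (U ω, (Z₁ ω, Z₂ ω))) ℙ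
      = (Measure.map U ℙ).prod ((gaussianReal 0 1).prod (gaussianReal 0 1)) := by
    rw [(indepFun_iff_map_prod_eq_prod_map_map hU.aemeasurable hZ.aemeasurable).1 hUindep,
      (indepFun_iff_map_prod_eq_prod_map_map hZ₁.aemeasurable hZ₂.aemeasurable).1 hZindep,
      hZ₁law, hZ₂law]
  have : IsProbabilityMeasure (Measure.map U ℙ) :=
    Measure.isProbabilityMeasure_map hU.aemeasurable
  set F : ℝ × (ℝ × ℝ) → ℂ := fun p => Complex.exp (Complex.I *
    ((t * (σ * Real.sqrt (2 * p.1)) : ℝ) * (c * p.2.1 + s * p.2.2))) with hF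
  have hFm : Measurable F := by fun_prop
  have hFn : ∀ p, ‖F p‖ ≤ 1 := fun p => by
    have : F p = Complex.exp (((t * (σ * Real.sqrt (2 * p.1)) * (c * p.2.1 + s * p.2.2) : ℝ) : ℂ)
        * Complex.I) := by
      simp only [hF]; push_cast; ring_nf
    rw [this, Complex.norm_exp_ofReal_mul_I]
  have hFint : Integrable F ((Measure.map U ℙ).prod ((gaussianReal 0 1).prod (gaussianReal 0 1))) :=
    Integrable.of_bound hFm.aestronglyMeasurable 1 (Filter.Eventually.of_forall hFn)
  calc _ = ∫ ω, F (U ω, (Z₁ ω, Z₂ ω)) ∂ℙ := by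
        refine integral_congr_ae (Filter.Eventually.of_forall fun ω => ?_)
        simp only [hF]; push_cast; ring_nf
    _ = ∫ p, F p ∂((Measure.map U ℙ).prod ((gaussianReal 0 1).prod (gaussianReal 0 1))) := by
        rw [← hlaw, integral_map (hU.prodMk hZ).aemeasurable hFm.aestronglyMeasurable]
    _ = ∫ u, ((Real.exp (-((t * (σ * Real.sqrt (2 * u))) ^ 2 / 2)) : ℝ) : ℂ)
          ∂(Measure.map U ℙ) := by
        rw [integral_prod _ hFint]
        refine integral_congr_ae (Filter.Eventually.of_forall fun u => ?_)
        exact integral_exp_gaussian_prod (t * (σ * Real.sqrt (2 * u))) c s hcs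
    _ = ∫ ω, ((Real.exp (-((t * (σ * Real.sqrt (2 * U ω))) ^ 2 / 2)) : ℝ) : ℂ) ∂ℙ := by
        rw [integral_map hU.aemeasurable]
        exact Measurable.aestronglyMeasurable (by fun_prop)
    _ = _ := by
        rw [integral_complex_ofReal]
        congr 2
        ext ω
        have := Real.sq_sqrt (show 0 ≤ 2 * U ω by linarith [hUpos ω])
        rw [mul_pow, mul_pow, this]
        ring_nf

/-- Let `0 < α ≤ 2`, `σ > 0`, `Z₁, Z₂` independent standard normals, and `U` a
positive random variable independent of `(Z₁, Z₂)` with Laplace transform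
`E[exp(−sU)] = exp(−s^(α/2))` for `s ≥ 0`. Set `X = σ√(2U)·(Z₁, Z₂)`, `R = ‖X‖`, and let `θ` be
uniform on `(0, 2π)` and independent of `X`. Then the characteristic function of `T₁ = R cos θ`
is `φ_{T₁}(t) = exp(−σ^α·|t|^α)`, i.e. `T₁` follows a zero-location symmetric α-stable
distribution with index `α` and scale `σ`. -/
theorem projection_is_symmetric_alpha_stable
    {Ω : Type*} [MeasureSpace Ω] [IsProbabilityMeasure (ℙ : Measure Ω)]
    (α σ : ℝ) (hα : 0 < α) (hα2 : α ≤ 2) (hσ : 0 < σ)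
    (Z₁ Z₂ U θ : Ω → ℝ)
    (hZ₁ : Measurable Z₁) (hZ₂ : Measurable Z₂) (hU : Measurable U) (hθ : Measurable θ)
    (hZ₁law : Measure.map Z₁ ℙ = gaussianReal 0 1)
    (hZ₂law : Measure.map Z₂ ℙ = gaussianReal 0 1)
    (hZindep : IndepFun Z₁ Z₂ ℙ)
    (hUpos : ∀ ω, 0 < U ω)
    (hUlaplace : ∀ s : ℝ, 0 ≤ s →
      ∫ ω, Real.exp (-(s * U ω)) ∂ℙ = Real.exp (-s ^ (α / 2)))
    (hUindep : IndepFun U (fun ω => (Z₁ ω, Z₂ ω)) ℙ)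
    (X : Ω → EuclideanSpace ℝ (Fin 2))
    (hXdef : X = fun ω =>
      toE2 (σ * Real.sqrt (2 * U ω) * Z₁ ω) (σ * Real.sqrt (2 * U ω) * Z₂ ω))
    (hθlaw : Measure.map θ ℙ
      = (ENNReal.ofReal (2 * π))⁻¹ • volume.restrict (Set.Ioo 0 (2 * π)))
    (hθindep : IndepFun X θ ℙ)
    (t : ℝ) :
    ∫ ω, Complex.exp (Complex.I * t * (‖X ω‖ * Real.cos (θ ω))) ∂ℙ
      = ((Real.exp (-(σ ^ α * |t| ^ α)) : ℝ) : ℂ) := by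
  have hXm : Measurable X := by
    rw [hXdef]
    unfold toE2
    refine (PiLp.continuous_toLp 2 (fun _ : Fin 2 => ℝ)).measurable.comp ?_
    refine measurable_pi_iff.2 fun i => ?_
    fin_cases i <;> simp <;> fun_prop
  set ν : Measure ℝ := Measure.map θ ℙ with hν
  have hνp : IsProbabilityMeasure ν := Measure.isProbabilityMeasure_map hθ.aemeasurable
  have hμp : IsProbabilityMeasure (Measure.map X ℙ) :=
    Measure.isProbabilityMeasure_map hXm.aemeasurable
  have hlaw : Measure.map (fun ω => (X ω, θ ω)) ℙ = (Measure.map X ℙ).prod ν :=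
    (indepFun_iff_map_prod_eq_prod_map_map hXm.aemeasurable hθ.aemeasurable).1 hθindep
  set F : EuclideanSpace ℝ (Fin 2) × ℝ → ℂ := fun p =>
    Complex.exp (Complex.I * t * (‖p.1‖ * Real.cos p.2)) with hF
  set G : EuclideanSpace ℝ (Fin 2) × ℝ → ℂ := fun p =>
    Complex.exp (Complex.I * t * (p.1 0 * Real.cos p.2 + p.1 1 * Real.sin p.2)) with hG
  have hFc : Continuous F := by fun_prop
  have hGc : Continuous G := by fun_prop
  have hFn : ∀ p, ‖F p‖ ≤ 1 := fun p => by
    have : F p = Complex.exp (((t * (‖p.1‖ * Real.cos p.2) : ℝ) : ℂ) * Complex.I) := by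
      simp only [hF]; push_cast; ring_nf
    rw [this, Complex.norm_exp_ofReal_mul_I]
  have hGn : ∀ p, ‖G p‖ ≤ 1 := fun p => by
    have : G p = Complex.exp
        (((t * (p.1 0 * Real.cos p.2 + p.1 1 * Real.sin p.2) : ℝ) : ℂ) * Complex.I) := by
      simp only [hG]; push_cast; ring_nf
    rw [this, Complex.norm_exp_ofReal_mul_I]
  have hFint : Integrable F ((Measure.map X ℙ).prod ν) :=
    Integrable.of_bound hFc.measurable.aestronglyMeasurable 1 (Filter.Eventually.of_forall hFn)
  have hGint : Integrable G ((Measure.map X ℙ).prod ν) :=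
    Integrable.of_bound hGc.measurable.aestronglyMeasurable 1 (Filter.Eventually.of_forall hGn)
  have hs : (σ ^ 2 * t ^ 2) ^ (α / 2) = σ ^ α * |t| ^ α := by
    rw [← sq_abs t, Real.mul_rpow (by positivity) (by positivity),
      ← Real.rpow_natCast, ← Real.rpow_natCast, ← Real.rpow_mul hσ.le,
      ← Real.rpow_mul (abs_nonneg t)]
    have : ((2 : ℕ) : ℝ) * (α / 2) = α := by push_cast; ring
    rw [this]
  -- Every fixed direction gives the same characteristic function.
  have hdir : ∀ y : ℝ, ∫ x, G (x, y) ∂(Measure.map X ℙ)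
      = ((Real.exp (-(σ ^ α * |t| ^ α)) : ℝ) : ℂ) := fun y => by
    have hGy : Measurable fun x => G (x, y) := by fun_prop
    rw [integral_map hXm.aemeasurable hGy.aestronglyMeasurable,
      ← hs, ← hUlaplace _ (by positivity),
      ← integral_exp_projection σ Z₁ Z₂ U hZ₁ hZ₂ hU hZ₁law hZ₂law hZindep hUpos hUindep t
        (Real.cos y) (Real.sin y) (Real.cos_sq_add_sin_sq y)]
    simp [hG, hXdef, toE2]
  calc _ = ∫ p, F p ∂((Measure.map X ℙ).prod ν) := by
        rw [← hlaw, integral_map (hXm.prodMk hθ).aemeasurable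
          hFc.measurable.aestronglyMeasurable]
    _ = ∫ p, G p ∂((Measure.map X ℙ).prod ν) := by
        rw [integral_prod _ hFint, integral_prod _ hGint]
        congr 1
        ext x
        rw [hθlaw, integral_smul_measure, integral_smul_measure]
        congr 1
        exact integral_norm_cos_eq t x
    _ = ∫ y, ∫ x, G (x, y) ∂(Measure.map X ℙ) ∂ν := integral_prod_symm _ hGint
    _ = _ := by simp_rw [hdir]; simp
end
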